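/- arXiv:1902.02630 — 2 statements merged into one kernel-verified Lean document; each statement's English description precedes it below -/
import Mathlib

section
/- Let R → S be a ring homomorphism such that the induced morphism Spec S → Spec R is universally injective (equivalently: Spec S → Spec R is injective on points and for every prime q of S lying over p in R, the residue field extension κ(p) ⊆ κ(q) is purely inseparable). Then every element of the kernel of the multiplication map S ⊗_R S → S, s ⊗ s' ↦ s s', is nilpotent; that is, ker(S ⊗_R S → S) is contained in the nilradical of S ⊗_R S. -/
/-!
STATEMENT 2: Let R → S be a ring homomorphism such that the induced morphism
Spec S → Spec R is universally injective.  Then every element of the kernel of the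
multiplication map S ⊗_R S → S, s ⊗ s' ↦ s s', is nilpotent; that is,
ker(S ⊗_R S → S) is contained in the nilradical of S ⊗_R S.
-/

open CategoryTheory AlgebraicGeometry TensorProduct

universe u

theorem universallyInjective_SpecMap_iff_surjective_comap_lmul'
    (R S : Type u) [CommRing R] [CommRing S] [Algebra R S] :
    UniversallyInjective (Spec.map (CommRingCat.ofHom (algebraMap R S))) ↔
      Function.Surjective
        (PrimeSpectrum.comap (Algebra.TensorProduct.lmul' R (S := S)).toRingHom) := by
  rw [UniversallyInjective.iff_diagonal, diagonal_SpecMap,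
    MorphismProperty.cancel_right_of_respectsIso @Surjective]
  exact surjective_iff _

theorem ker_mul_le_nilradical_of_universallyInjective_general
    {R S : Type u} [CommRing R] [CommRing S] [Algebra R S]
    (h : UniversallyInjective (Spec.map (CommRingCat.ofHom (algebraMap R S)))) :
    RingHom.ker (Algebra.TensorProduct.lmul' R (S := S)).toRingHom ≤ nilradical (S ⊗[R] S) := by
  rw [← PrimeSpectrum.denseRange_comap_iff_ker_le_nilRadical]
  exact ((universallyInjective_SpecMap_iff_surjective_comap_lmul' R S).mp h).denseRange

theorem ker_mul_le_nilradical_of_universallyInjective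
    (R S : Type) [CommRing R] [CommRing S] [Algebra R S]
    (h : UniversallyInjective (Spec.map (CommRingCat.ofHom (algebraMap R S))))
    (x : S ⊗[R] S) (hx : x ∈ RingHom.ker (Algebra.TensorProduct.lmul' R (S := S)).toRingHom) :
    IsNilpotent x :=
  mem_nilradical.mp (ker_mul_le_nilradical_of_universallyInjective_general h hx)
end

section
/- Let p ≥ 5 be a prime, let c ∈ F_p^× be a non-square, and let a ∈ F_p^× with 27a ≠ 16 in F_p. Let F := w(x³ + y³ + z³ + (t + a(1−t))w³) + (t z² + x y + t y z)² − (c − t) t² y² z², a homogeneous polynomial of degree 4 in x, y, z, w with coefficients in F_p[t]. Let K = F_p((t)) be the field of formal Laurent series and let X ⊆ P³_K be the closed subscheme of projective 3-space over K defined by the image of F under F_p[t] → K. Then X is smooth over K (hence X is a smooth quartic surface, a K3 surface, over F_p((t))). -/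
/-!
STATEMENT 8: Let p ≥ 5 be a prime, let c ∈ F_p^× be a non-square, and let a ∈ F_p^×
with 27a ≠ 16 in F_p.  Let
  F := w(x³ + y³ + z³ + (t + a(1−t))w³) + (t z² + x y + t y z)² − (c − t) t² y² z²,
a homogeneous polynomial of degree 4 in x, y, z, w with coefficients in F_p[t].
Let K = F_p((t)) be the field of formal Laurent series (the fraction field of F_p[[t]])
and let X ⊆ P³_K be the closed subscheme defined by the image of F under F_p[t] → K.
Then X is smooth over K.

Here smoothness of `X = V₊(F) ⊆ P³_K` is expressed on the standard affine charts:
`X ∩ D₊(xᵢ) = Spec (K[x,y,z,w]/(F, xᵢ − 1))`, and these four charts cover `X`.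
-/

open MvPolynomial

noncomputable section

/-- The quartic `F ∈ F_p[t][x,y,z,w]` (variables `X 0 = x`, `X 1 = y`, `X 2 = z`, `X 3 = w`). -/
def Fquartic (p : ℕ) (c a : ZMod p) : MvPolynomial (Fin 4) (Polynomial (ZMod p)) :=
  X 3 * (X 0 ^ 3 + X 1 ^ 3 + X 2 ^ 3 +
      C (Polynomial.X + Polynomial.C a * (1 - Polynomial.X)) * X 3 ^ 3) +
    (C Polynomial.X * X 2 ^ 2 + X 0 * X 1 + C Polynomial.X * X 1 * X 2) ^ 2 -
    C ((Polynomial.C c - Polynomial.X) * Polynomial.X ^ 2) * X 1 ^ 2 * X 2 ^ 2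

/-- The image of `F` in `K[x,y,z,w]`, where `K` is the Laurent series field `F_p((t))`,
realised as the fraction field of `F_p[[t]]`; the map `F_p[t] → K` sends `t` to the image of
`PowerSeries.X`. -/
def FquarticK (p : ℕ) (K : Type) [Field K] [Algebra (PowerSeries (ZMod p)) K]
    (c a : ZMod p) : MvPolynomial (Fin 4) K :=
  MvPolynomial.map
    ((algebraMap (PowerSeries (ZMod p)) K).comp (Polynomial.coeToPowerSeries.ringHom))
    (Fquartic p c a)

/-!
Dehomogenising at `xᵢ = 1`, the two equations `F` and `xᵢ - 1` have independent differentials at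
every point where the partial derivatives of `F` do not all vanish, because the Euler derivation
kills `F` modulo `F` and sends `xᵢ - 1` to `1`. So it suffices to show that `F` has no nonzero
singular zero over a field `L` containing `k((t))`.

Choose a valuation ring `A` of `L` dominating `k⟦t⟧` and rescale a singular zero so that its
coordinates lie in `A`, one of them being `1`. Write `b = t + a(1 - t)`, `e = c - t` and
`Q = tz² + xy + tyz`. If `w` is a unit, then modulo `(tz, t²)` the equations force `27 = 16b`; but
`27 - 16b` divides `t`, so `t ∈ t𝔪`, which is absurd. If `w` is not a unit, then `xy` and
`x³ + y³ + z³` lie in the maximal ideal, and the ways in which some coordinate could still be a unit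
are ruled out by successively extracting powers of `t`, `w` and `y` from `Q`.
-/

section DualDerivations

variable {R P ι : Type*} [CommRing R] [CommRing P] [Algebra R P]

theorem exists_algHom_eq_sub_sum_mul_derivation [Fintype ι] {B : Type*} [CommRing B]
    [Algebra R B] (q : P →ₐ[R] B) (ε : ι → B) (hε : ∀ i j, ε i * ε j = 0)
    (D : ι → Derivation R P P) :
    ∃ φ : P →ₐ[R] B, ∀ r, φ r = q r - ∑ i, ε i * q (D i r) := by
  let δ : P →ₗ[R] B :=
    ∑ i, LinearMap.mulLeft R (ε i) ∘ₗ q.toLinearMap ∘ₗ (D i : P →ₗ[R] P)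
  have hδ (r : P) : δ r = ∑ i, ε i * q (D i r) := by simp [δ]
  have δ_mul_δ (r s : P) : δ r * δ s = 0 := by
    rw [hδ, hδ, Finset.sum_mul_sum]
    refine Finset.sum_eq_zero fun i _ ↦ Finset.sum_eq_zero fun j _ ↦ ?_
    linear_combination q (D i r) * q (D j s) * hε i j
  have leibniz (r s : P) : δ (r * s) = q r * δ s + q s * δ r := by
    simp only [hδ, Derivation.leibniz, smul_eq_mul, map_add, map_mul, Finset.mul_sum,
      ← Finset.sum_add_distrib]
    exact Finset.sum_congr rfl fun i _ ↦ by ring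
  refine ⟨AlgHom.ofLinearMap (q.toLinearMap - δ) (by simp [hδ]) fun r s ↦ ?_, fun r ↦ ?_⟩
  · simp only [LinearMap.sub_apply, AlgHom.toLinearMap_apply, map_mul, leibniz]
    linear_combination -δ_mul_δ r s
  · simp [hδ]

theorem exists_algHom_section_of_dual_derivations [Finite ι] [DecidableEq ι] {A B : Type*}
    [CommRing A] [Algebra R A] [CommRing B] [Algebra R B] (q : P →ₐ[R] B) (κ : B →ₐ[R] A)
    (hκq : Function.Surjective (κ.comp q))
    (hq : ∀ r s, κ (q r) = 0 → κ (q s) = 0 → q r * q s = 0)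
    (f : ι → P) (hf : Ideal.span (Set.range f) = RingHom.ker (κ.comp q))
    (D : ι → Derivation R P P) (hD : ∀ i j, κ (q (D i (f j))) = (1 : Matrix ι ι A) i j) :
    ∃ g : A →ₐ[R] B, κ.comp g = AlgHom.id R A := by
  have := Fintype.ofFinite ι
  have κq_f (i : ι) : κ (q (f i)) = 0 := by
    rw [← AlgHom.comp_apply, ← RingHom.mem_ker, ← hf]
    exact Ideal.subset_span ⟨i, rfl⟩
  obtain ⟨φ, hφ⟩ := exists_algHom_eq_sub_sum_mul_derivation q (fun i ↦ q (f i))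
    (fun i j ↦ hq _ _ (κq_f i) (κq_f j)) D
  have φ_f (j : ι) : φ (f j) = 0 := by
    have kronecker (i : ι) : q (f i) * q (D i (f j)) = q (f i) * q ((1 : Matrix ι ι P) i j) := by
      rw [← sub_eq_zero, ← mul_sub, ← map_sub]
      exact hq _ _ (κq_f i) (by simp [hD, Matrix.one_apply, apply_ite q, apply_ite κ])
    simp [hφ, kronecker, Matrix.one_apply, apply_ite q]
  have ker_le : RingHom.ker (κ.comp q).toRingHom ≤ RingHom.ker φ.toRingHom :=
    hf.symm.trans_le (Ideal.span_le.2 (Set.range_subset_iff.2 φ_f))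
  refine ⟨AlgHom.liftOfSurjective (κ.comp q) hκq φ ker_le, AlgHom.ext fun x ↦ ?_⟩
  obtain ⟨r, rfl⟩ := hκq x
  rw [AlgHom.comp_apply κ, AlgHom.liftOfSurjective_apply]
  simp [hφ, κq_f]

theorem formallySmooth_of_dual_derivations [Finite ι] [DecidableEq ι] {A : Type*} [CommRing A]
    [Algebra R A] [Algebra.FormallySmooth R P] (π : P →ₐ[R] A) (hπ : Function.Surjective π)
    (f : ι → P) (hf : Ideal.span (Set.range f) = RingHom.ker π) (D : ι → Derivation R P P)
    (hD : ∀ i j, π (D i (f j)) = (1 : Matrix ι ι A) i j) :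
    Algebra.FormallySmooth R A := by
  let q := Ideal.Quotient.mkₐ R (RingHom.ker π.toRingHom ^ 2)
  have q_mul_q (r s : P) (hr : π r = 0) (hs : π s = 0) : q r * q s = 0 := by
    rw [← map_mul]
    refine Ideal.Quotient.eq_zero_iff_mem.2 ?_
    rw [pow_two]
    exact Ideal.mul_mem_mul hr hs
  obtain ⟨g, hg⟩ := exists_algHom_section_of_dual_derivations q π.kerSquareLift hπ q_mul_q f hf D hD
  exact .of_split π g hg

end DualDerivations

section Homogeneous

universe u v w

variable {R : Type u} {σ : Type v} [CommRing R] {n : ℕ} {F : MvPolynomial σ R}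

theorem mkDerivation_apply_eq_sum_mul_pderiv [Fintype σ] (g : σ → MvPolynomial σ R)
    (G : MvPolynomial σ R) : mkDerivation R g G = ∑ j, g j * pderiv j G := by
  classical
  have sum_apply (H : MvPolynomial σ R) :
      (∑ j, g j • pderiv j : Derivation R _ _) H = ∑ j, g j * pderiv j H := by
    rw [← Derivation.coeFnAddMonoidHom_apply, map_sum, Finset.sum_apply]
    rfl
  rw [← sum_apply]
  congr 1
  exact derivation_ext fun i ↦ by simp [sum_apply, pderiv_X, Pi.single_apply, mkDerivation_X]

theorem smooth_of_ker_eq_span_pair_of_span_pderiv_eq_top [Finite σ] (hF : F.IsHomogeneous n)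
    {A : Type*} [CommRing A] [Algebra R A] (π : MvPolynomial σ R →ₐ[R] A)
    (hπ : Function.Surjective π) {i : σ} (hker : RingHom.ker π = Ideal.span {F, X i - 1})
    (hpderiv : Ideal.span (Set.range fun j ↦ π (pderiv j F)) = ⊤) :
    Algebra.Smooth R A := by
  have := Fintype.ofFinite σ
  have π_F : π F = 0 := by
    rw [← RingHom.mem_ker, hker]
    exact Ideal.subset_span (by simp)
  have π_X : π (X i) = 1 := by
    rw [← sub_eq_zero, ← map_one π, ← map_sub, ← RingHom.mem_ker, hker]
    exact Ideal.subset_span (by simp)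
  obtain ⟨c, hc⟩ := Ideal.mem_span_range_iff_exists_fun.1 ((Ideal.eq_top_iff_one _).1 hpderiv)
  choose g hg using fun j ↦ hπ (c j)
  let D := mkDerivation R g
  let E := mkDerivation R (X : σ → MvPolynomial σ R)
  have π_D_F : π (D F) = 1 := by simp [D, mkDerivation_apply_eq_sum_mul_pderiv, hg, hc]
  have D_X : D (X i) = g i := by simp [D, mkDerivation_X]
  have E_F : E F = n • F := by
    rw [mkDerivation_apply_eq_sum_mul_pderiv, hF.sum_X_mul_pderiv]
  have E_X : E (X i) = X i := by simp [E, mkDerivation_X]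
  refine { formallySmooth := ?_, finitePresentation := ?_ }
  · refine formallySmooth_of_dual_derivations π hπ ![F, X i - 1]
      (by rw [Matrix.range_cons_cons_empty, hker]) ![D - g i • E, E] ?_
    simp [Fin.forall_fin_two, π_D_F, D_X, E_F, E_X, π_F, π_X]
  · exact .of_surjective hπ (hker ▸ Submodule.fg_span (Set.toFinite _))

/-- A common zero `x` of `F` and its partial derivatives, with coordinates in an `R`-algebra. It is
a point of the affine cone: for `F` homogeneous of degree at least `2` the origin is included. -/
def IsSingularZero {A : Type*} [CommRing A] [Algebra R A] (F : MvPolynomial σ R) (x : σ → A) :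
    Prop :=
  aeval x F = 0 ∧ ∀ j, aeval x (pderiv j F) = 0

theorem isSingularZero_map_iff {A B : Type*} [CommRing A] [CommRing B] [Algebra R A] [Algebra A B]
    [Algebra R B] [IsScalarTower R A B] {x : σ → B} :
    IsSingularZero (map (algebraMap R A) F) x ↔ IsSingularZero F x := by
  simp [IsSingularZero, pderiv_map, aeval_map_algebraMap]

theorem isSingularZero_algebraMap_comp_iff {A B : Type*} [CommRing A] [CommRing B] [Algebra R A]
    [Algebra A B] [Algebra R B] [IsScalarTower R A B] [FaithfulSMul A B] {x : σ → A} :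
    IsSingularZero F (algebraMap A B ∘ x) ↔ IsSingularZero F x := by
  simp only [IsSingularZero,
    aeval_algebraMap_eq_zero_iff_of_injective _ (FaithfulSMul.algebraMap_injective A B)]

theorem aeval_smul_of_isHomogeneous {A : Type*} [CommRing A] [Algebra R A] (hF : F.IsHomogeneous n)
    (r : A) (x : σ → A) : aeval (r • x) F = r ^ n * aeval x F := by
  rw [aeval_def, aeval_def, eval₂_eq, eval₂_eq, Finset.mul_sum]
  refine Finset.sum_congr rfl fun d hd ↦ ?_
  rw [hF.degree_eq_sum_deg_support hd]
  simp only [Pi.smul_apply, smul_eq_mul, mul_pow, Finset.prod_mul_distrib,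
    Finset.prod_pow_eq_pow_sum]
  ring

theorem IsSingularZero.smul {A : Type*} [CommRing A] [Algebra R A] (hF : F.IsHomogeneous n)
    {x : σ → A} (hx : IsSingularZero F x) (r : A) : IsSingularZero F (r • x) :=
  ⟨by rw [aeval_smul_of_isHomogeneous hF, hx.1, mul_zero],
    fun j ↦ by rw [aeval_smul_of_isHomogeneous hF.pderiv, hx.2, mul_zero]⟩

theorem exists_primitive_of_ne_zero {L : Type*} [Field L] [Finite σ] (A : ValuationSubring L)
    {x : σ → L} (hx : x ≠ 0) :
    ∃ (r : L) (y : σ → A), algebraMap A L ∘ y = r • x ∧ ∃ i, y i = 1 := by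
  obtain ⟨j, hj⟩ := Function.ne_iff.1 hx
  have : Nonempty σ := ⟨j⟩
  obtain ⟨i, hi⟩ := Finite.exists_max (A.valuation ∘ x)
  have x_i_ne_zero : x i ≠ 0 := fun h ↦ hj (by simpa [h] using hi j)
  have ratio_mem (k : σ) : (x i)⁻¹ * x k ∈ A := by
    rw [← A.valuation_le_one_iff, map_mul, map_inv₀]
    exact inv_mul_le_one_of_le₀ (hi k) zero_le
  exact ⟨(x i)⁻¹, fun k ↦ ⟨_, ratio_mem k⟩, rfl, i, Subtype.ext (inv_mul_cancel₀ x_i_ne_zero)⟩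

theorem smooth_chart_of_isSingularZero_imp_eq_zero [Finite σ] (hF : F.IsHomogeneous n)
    (hzero : ∀ (L : Type max u v) [Field L] [Algebra R L] (x : σ → L),
      IsSingularZero F x → x = 0) (i : σ) :
    Algebra.Smooth R (MvPolynomial σ R ⧸ Ideal.span {F, X i - 1}) := by
  let I := Ideal.span {F, X i - 1}
  refine smooth_of_ker_eq_span_pair_of_span_pderiv_eq_top hF (Ideal.Quotient.mkₐ R I)
    (Ideal.Quotient.mkₐ_surjective R I) (Ideal.Quotient.mkₐ_ker R I) ?_
  by_contra hne
  obtain ⟨M, hM, hle⟩ := Ideal.exists_le_maximal _ hne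
  let _ : Field ((MvPolynomial σ R ⧸ I) ⧸ M) := Ideal.Quotient.field M
  let ρ : MvPolynomial σ R →ₐ[R] (MvPolynomial σ R ⧸ I) ⧸ M :=
    (Ideal.Quotient.mkₐ R M).comp (Ideal.Quotient.mkₐ R I)
  have ρ_eq_zero {G : MvPolynomial σ R} (hG : G ∈ I) : ρ G = 0 := by
    rw [AlgHom.comp_apply, Ideal.Quotient.mkₐ_eq_mk R I, Ideal.Quotient.eq_zero_iff_mem.2 hG,
      map_zero]
  have aeval_ρ (G : MvPolynomial σ R) : aeval (fun j ↦ ρ (X j)) G = ρ G :=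
    DFunLike.congr_fun (aeval_unique ρ).symm G
  have singular : IsSingularZero F fun j ↦ ρ (X j) := by
    refine ⟨?_, fun j ↦ ?_⟩ <;> rw [aeval_ρ]
    · exact ρ_eq_zero (Ideal.subset_span (by simp))
    · exact Ideal.Quotient.eq_zero_iff_mem.2 (hle (Ideal.subset_span ⟨j, rfl⟩))
  have ρ_X : ρ (X i) = 1 := by
    rw [← sub_eq_zero, ← map_one ρ, ← map_sub]
    exact ρ_eq_zero (Ideal.subset_span (by simp))
  exact one_ne_zero (ρ_X.symm.trans (congr_fun (hzero _ _ singular) i))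

theorem smooth_chart_of_isSingularZero_imp_mem_maximalIdeal [Finite σ] [IsLocalRing R]
    {K : Type w} [Field K] [Algebra R K] [FaithfulSMul R K] (hF : F.IsHomogeneous n)
    (hmem : ∀ (A : Type max v w) [CommRing A] [IsDomain A] [ValuationRing A] [Algebra R A]
      [FaithfulSMul R A] [IsLocalHom (algebraMap R A)] (x : σ → A), IsSingularZero F x →
      ∀ j, x j ∈ IsLocalRing.maximalIdeal A) (i : σ) :
    Algebra.Smooth K
      (MvPolynomial σ K ⧸ Ideal.span {map (algebraMap R K) F, X i - 1}) := by
  refine smooth_chart_of_isSingularZero_imp_eq_zero (hF.map _) (fun L _ _ x hx ↦ ?_) i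
  by_contra hx_ne_zero
  let _ : Algebra R L := Algebra.compHom L (algebraMap R K)
  have : IsScalarTower R K L := .of_algebraMap_eq fun _ ↦ rfl
  obtain ⟨A, mem_A, isLocalHom⟩ := IsLocalRing.exists_factor_valuationRing (algebraMap R L)
  let _ : Algebra R A := ((algebraMap R L).codRestrict A.toSubring mem_A).toAlgebra
  have : IsScalarTower R A L := .of_algebraMap_eq fun _ ↦ rfl
  have : FaithfulSMul R L := .trans R K L
  have : FaithfulSMul R A := .tower_bot R A L
  have : IsLocalHom (algebraMap R A) := isLocalHom
  obtain ⟨r, y, y_eq, j, y_j⟩ := exists_primitive_of_ne_zero A hx_ne_zero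
  have singular_y : IsSingularZero F y := by
    rw [← isSingularZero_algebraMap_comp_iff (B := L), y_eq]
    exact (isSingularZero_map_iff.1 hx).smul hF r
  exact IsLocalRing.notMem_maximalIdeal.2 (y_j ▸ isUnit_one) (hmem A y singular_y j)

end Homogeneous

section Quartic

open IsLocalRing

/-- The quartic of the paper, with independent coefficients: `b` stands for `t + a(1 - t)` and `e`
for `c - t`. The variables are `X 0 = x`, `X 1 = y`, `X 2 = z` and `X 3 = w`. -/
def quarticForm {R : Type*} [CommRing R] (t b e : R) : MvPolynomial (Fin 4) R :=
  X 3 * (X 0 ^ 3 + X 1 ^ 3 + X 2 ^ 3 + C b * X 3 ^ 3) +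
    (C t * X 2 ^ 2 + X 0 * X 1 + C t * X 1 * X 2) ^ 2 - C (e * t ^ 2) * X 1 ^ 2 * X 2 ^ 2

theorem map_quarticForm {R S : Type*} [CommRing R] [CommRing S] (f : R →+* S) (t b e : R) :
    map f (quarticForm t b e) = quarticForm (f t) (f b) (f e) := by
  simp [quarticForm]

theorem isHomogeneous_quarticForm {R : Type*} [CommRing R] (t b e : R) :
    (quarticForm t b e).IsHomogeneous 4 := by
  have hX (i : Fin 4) (n : ℕ) : (X i ^ n : MvPolynomial (Fin 4) R).IsHomogeneous n := by
    simpa using (isHomogeneous_X R i).pow n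
  have cubic := (((hX 0 3).add (hX 1 3)).add (hX 2 3)).add ((hX 3 3).C_mul b)
  have conic := (((hX 2 2).C_mul t).add ((isHomogeneous_X R 0).mul (isHomogeneous_X R 1))).add
    (((isHomogeneous_X R 1).C_mul t).mul (isHomogeneous_X R 2))
  exact (((isHomogeneous_X R 3).mul cubic).add (conic.pow 2)).sub
    (((hX 1 2).C_mul (e * t ^ 2)).mul (hX 2 2))

/-- The equations satisfied by a singular zero `(x, y, z, w)` of `quarticForm t b e`, with the
squared term abbreviated to `Q`: the vanishing of the four partial derivatives, and that of
`F - w ∂F/∂w`, which does not involve `x³ + y³ + z³`. -/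
structure QuarticSingularEquations {A : Type*} [CommRing A] (t b e x y z w Q : A) : Prop where
  def_Q : Q = t * z ^ 2 + x * y + t * y * z
  eq_x : 3 * w * x ^ 2 + 2 * Q * y = 0
  eq_y : 3 * w * y ^ 2 + 2 * Q * (x + t * z) = 2 * e * t ^ 2 * y * z ^ 2
  eq_z : 3 * w * z ^ 2 + 2 * t * Q * (2 * z + y) = 2 * e * t ^ 2 * y ^ 2 * z
  eq_w : x ^ 3 + y ^ 3 + z ^ 3 + 4 * b * w ^ 3 = 0
  eq_Q : Q ^ 2 = 3 * b * w ^ 4 + e * t ^ 2 * y ^ 2 * z ^ 2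

theorem IsSingularZero.quarticSingularEquations {A : Type*} [CommRing A] {t b e : A}
    {v : Fin 4 → A} (hv : IsSingularZero (quarticForm t b e) v) :
    QuarticSingularEquations t b e (v 0) (v 1) (v 2) (v 3)
      (t * v 2 ^ 2 + v 0 * v 1 + t * v 1 * v 2) := by
  simp only [IsSingularZero, quarticForm, Fin.forall_fin_succ, aeval_eq_eval, map_sub, map_add,
    map_mul, map_pow, map_one, map_zero, map_ofNat, eval_X, eval_C, Derivation.leibniz,
    Derivation.leibniz_pow, derivation_C, pderiv_X, Pi.single_apply, smul_eq_mul, nsmul_eq_mul,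
    mul_one, mul_zero, zero_add, add_zero, sub_zero, pow_one, Nat.cast_ofNat, Nat.add_one_sub_one,
    Fin.reduceEq, Fin.reduceSucc, Fin.succ_zero_eq_one, Fin.succ_one_eq_two, Fin.isValue, reduceIte,
    IsEmpty.forall_iff, and_true] at hv
  obtain ⟨form, partial_x, partial_y, partial_z, partial_w⟩ := hv
  exact
    { def_Q := rfl
      eq_x := by linear_combination partial_x
      eq_y := by linear_combination partial_y
      eq_z := by linear_combination partial_z
      eq_w := by linear_combination partial_w
      eq_Q := by linear_combination form - v 3 * partial_w }

theorem isUnit_add_of_mem_maximalIdeal {A : Type*} [CommRing A] [IsLocalRing A] {u v : A}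
    (hu : IsUnit u) (hv : v ∈ maximalIdeal A) : IsUnit (u + v) := by
  rw [← notMem_maximalIdeal] at hu ⊢
  rwa [Ideal.add_mem_iff_left _ hv]

namespace QuarticSingularEquations

section CommRing

variable {A : Type*} [CommRing A] {t b e x y z w Q : A}

theorem map {B : Type*} [CommRing B] (h : QuarticSingularEquations t b e x y z w Q)
    (f : A →+* B) :
    QuarticSingularEquations (f t) (f b) (f e) (f x) (f y) (f z) (f w) (f Q) where
  def_Q := by simpa using congr(f $h.def_Q)
  eq_x := by simpa [map_ofNat] using congr(f $h.eq_x)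
  eq_y := by simpa [map_ofNat] using congr(f $h.eq_y)
  eq_z := by simpa [map_ofNat] using congr(f $h.eq_z)
  eq_w := by simpa [map_ofNat] using congr(f $h.eq_w)
  eq_Q := by simpa [map_ofNat] using congr(f $h.eq_Q)

theorem twentySeven_eq (h : QuarticSingularEquations t b e x y z w Q) (three : IsUnit (3 : A))
    (hb : IsUnit b) (hw : IsUnit w) (tz : t * z = 0) (tt : t ^ 2 = 0) : 27 = 16 * b := by
  have Q_eq : Q = x * y := by linear_combination h.def_Q + (z + y) * tz
  have Q_sq : Q ^ 2 = 3 * b * w ^ 4 := by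
    linear_combination h.eq_Q + e * y ^ 2 * z ^ 2 * tt
  have x_cube : x ^ 3 = -2 * b * w ^ 3 := by
    refine (three.mul hw).mul_left_cancel ?_
    linear_combination x * h.eq_x - 2 * Q_sq + 2 * Q * Q_eq
  have y_cube : y ^ 3 = -2 * b * w ^ 3 := by
    refine (three.mul hw).mul_left_cancel ?_
    linear_combination y * h.eq_y - 2 * Q_sq + 2 * Q * Q_eq
      + 2 * e * y ^ 2 * z ^ 2 * tt - 2 * Q * y * tz
  have three_mul_Q : 3 * Q = 4 * b * w ^ 2 := by
    refine (hb.mul (hw.pow 4)).mul_left_cancel ?_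
    linear_combination -Q * Q_sq + x ^ 3 * y_cube - 2 * b * w ^ 3 * x_cube
      + (Q ^ 2 + Q * (x * y) + (x * y) ^ 2) * Q_eq
  refine (hb.mul (hw.pow 4)).mul_left_cancel ?_
  linear_combination (3 * Q + 4 * b * w ^ 2) * three_mul_Q - 9 * Q_sq

end CommRing

section IsLocalRing

variable {A : Type*} [CommRing A] [IsLocalRing A] {t b e x y z w Q : A}

theorem w_mem_maximalIdeal (h : QuarticSingularEquations t b e x y z w Q)
    (three : IsUnit (3 : A)) (hb : IsUnit b) (ht : t ∈ maximalIdeal A) (ht_ne : t ≠ 0)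
    (hdvd : 27 - 16 * b ∣ t) : w ∈ maximalIdeal A := by
  by_contra hw
  rw [notMem_maximalIdeal] at hw
  have hz : z ∈ maximalIdeal A := by
    refine Ideal.IsPrime.mem_of_pow_mem inferInstance 2
      ((Ideal.unit_mul_mem_iff_mem _ (three.mul hw)).1 ?_)
    convert Ideal.mul_mem_right (2 * e * t * y ^ 2 * z - 2 * Q * (2 * z + y)) _ ht using 1
    linear_combination h.eq_z
  let J := Ideal.span {t * z, t ^ 2}
  have sub_mem : 27 - 16 * b ∈ J := by
    rw [← Ideal.Quotient.eq_zero_iff_mem, map_sub, map_mul, map_ofNat, map_ofNat, sub_eq_zero]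
    have three_mk : IsUnit (3 : A ⧸ J) := by
      simpa [map_ofNat] using three.map (Ideal.Quotient.mk J)
    refine (h.map (Ideal.Quotient.mk J)).twentySeven_eq three_mk (hb.map _) (hw.map _) ?_ ?_
    · exact Ideal.Quotient.eq_zero_iff_mem.2 (Ideal.subset_span (by simp))
    · exact Ideal.Quotient.eq_zero_iff_mem.2 (Ideal.subset_span (by simp))
  obtain ⟨α, β, hαβ⟩ := Ideal.mem_span_pair.1 sub_mem
  obtain ⟨γ, hγ⟩ := hdvd
  have unit : IsUnit (1 + -γ * (α * z + β * t)) := isUnit_add_of_mem_maximalIdeal isUnit_one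
    (Ideal.mul_mem_left _ _ (add_mem (Ideal.mul_mem_left _ _ hz) (Ideal.mul_mem_left _ _ ht)))
  refine ht_ne (unit.mul_left_cancel ?_)
  linear_combination hγ - γ * hαβ

variable [IsDomain A]

theorem z_eq_zero_of_isUnit_y (h : QuarticSingularEquations t b e x y z w Q)
    (two : IsUnit (2 : A)) (three : IsUnit (3 : A)) (he : IsUnit e) (ht : t ∈ maximalIdeal A)
    (ht_ne : t ≠ 0) (hw : w ∈ maximalIdeal A) (hx : x ∈ maximalIdeal A) (hy : IsUnit y) :
    z = 0 := by
  obtain ⟨q, rfl⟩ : w ∣ Q := by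
    rw [← (two.mul hy).dvd_mul_left]
    exact ⟨-3 * x ^ 2, by linear_combination h.eq_x⟩
  have unit : IsUnit (3 * y ^ 3 + (2 * y * q * (x + t * z) + w * (6 * b * w ^ 2 - 2 * q ^ 2))) := by
    refine isUnit_add_of_mem_maximalIdeal (three.mul (hy.pow 3)) (add_mem ?_ ?_)
    · exact Ideal.mul_mem_left _ _ (add_mem hx (Ideal.mul_mem_right _ _ ht))
    · exact Ideal.mul_mem_right _ _ hw
  obtain rfl : w = 0 := unit.mul_left_cancel (by linear_combination y * h.eq_y - 2 * h.eq_Q)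
  have tz_sq : 2 * e * y * (t * z) ^ 2 = 0 := by linear_combination -h.eq_y
  simpa [((two.mul he).mul hy).ne_zero, ht_ne] using tz_sq

theorem z_mem_maximalIdeal_of_isUnit_x (h : QuarticSingularEquations t b e x y z w Q)
    (two : IsUnit (2 : A)) (three : IsUnit (3 : A)) (he : IsUnit e) (ht : t ∈ maximalIdeal A)
    (ht_ne : t ≠ 0) (hy : y ∈ maximalIdeal A) (hx : IsUnit x) : z ∈ maximalIdeal A := by
  by_contra hz
  rw [notMem_maximalIdeal] at hz
  obtain ⟨r, rfl⟩ : Q * y ∣ w := by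
    rw [← (three.mul (hx.pow 2)).dvd_mul_left]
    exact ⟨-2, by linear_combination h.eq_x⟩
  have unit_two_x : IsUnit (2 * x + (y * (3 * y ^ 2 * r) + t * (2 * z))) :=
    isUnit_add_of_mem_maximalIdeal (two.mul hx)
      (add_mem (Ideal.mul_mem_right _ _ hy) (Ideal.mul_mem_right _ _ ht))
  obtain ⟨s, hs⟩ : t ^ 2 * y ∣ Q := by
    rw [← unit_two_x.dvd_mul_left]
    exact ⟨2 * e * z ^ 2, by linear_combination h.eq_y⟩
  have unit_e : IsUnit (e * z ^ 2 + t * (t * s ^ 2 * (3 * b * Q ^ 2 * y ^ 4 * r ^ 4 - 1))) :=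
    isUnit_add_of_mem_maximalIdeal (he.mul (hz.pow 2)) (Ideal.mul_mem_right _ _ ht)
  have ty_sq : (t * y) ^ 2 = 0 := by
    refine unit_e.mul_left_cancel ?_
    linear_combination
      -h.eq_Q - (3 * b * Q ^ 2 * y ^ 4 * r ^ 4 - 1) * (Q + t ^ 2 * y * s) * hs
  obtain rfl : y = 0 := by simpa [ht_ne] using ty_sq
  have tz_sq : t * z ^ 2 = 0 := by linear_combination hs - h.def_Q
  simp [ht_ne, hz.ne_zero] at tz_sq

theorem mem_maximalIdeal (h : QuarticSingularEquations t b e x y z w Q)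
    (two : IsUnit (2 : A)) (three : IsUnit (3 : A)) (hb : IsUnit b) (he : IsUnit e)
    (ht : t ∈ maximalIdeal A) (ht_ne : t ≠ 0) (hdvd : 27 - 16 * b ∣ t) :
    x ∈ maximalIdeal A ∧ y ∈ maximalIdeal A ∧ z ∈ maximalIdeal A ∧ w ∈ maximalIdeal A := by
  have hw := h.w_mem_maximalIdeal three hb ht ht_ne hdvd
  have h_res := h.map (residue A)
  have t_res : residue A t = 0 := (residue_eq_zero_iff t).2 ht
  have w_res : residue A w = 0 := (residue_eq_zero_iff w).2 hw
  have Q_res : residue A Q = 0 := by simpa [t_res, w_res] using h_res.eq_Q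
  have xy_res : residue A x = 0 ∨ residue A y = 0 := by
    simpa [t_res, Q_res] using h_res.def_Q
  have cubes_res : residue A x ^ 3 + residue A y ^ 3 + residue A z ^ 3 = 0 := by
    simpa [w_res] using h_res.eq_w
  have y_res : residue A y = 0 := by
    by_contra y_res
    have x_res := xy_res.resolve_right y_res
    have hz : z = 0 := h.z_eq_zero_of_isUnit_y two three he ht ht_ne hw
      ((residue_eq_zero_iff x).1 x_res) ((residue_ne_zero_iff_isUnit y).1 y_res)
    exact y_res (by simpa [x_res, hz] using cubes_res)
  have x_res : residue A x = 0 := by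
    by_contra x_res
    have hz := h.z_mem_maximalIdeal_of_isUnit_x two three he ht ht_ne
      ((residue_eq_zero_iff y).1 y_res) ((residue_ne_zero_iff_isUnit x).1 x_res)
    exact x_res (by simpa [y_res, (residue_eq_zero_iff z).2 hz] using cubes_res)
  have z_res : residue A z = 0 := by simpa [x_res, y_res] using cubes_res
  simp only [← residue_eq_zero_iff, x_res, y_res, z_res, w_res, and_self]

end IsLocalRing

end QuarticSingularEquations

theorem smooth_chart_quarticForm {R : Type*} [CommRing R] [IsLocalRing R] {K : Type*} [Field K]
    [Algebra R K] [FaithfulSMul R K] {t b e : R} (two : IsUnit (2 : R)) (three : IsUnit (3 : R))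
    (hb : IsUnit b) (he : IsUnit e) (ht : t ∈ maximalIdeal R) (ht_ne : t ≠ 0)
    (hdvd : 27 - 16 * b ∣ t) (i : Fin 4) :
    Algebra.Smooth K
      (MvPolynomial (Fin 4) K ⧸
        Ideal.span {map (algebraMap R K) (quarticForm t b e), X i - 1}) := by
  refine smooth_chart_of_isSingularZero_imp_mem_maximalIdeal (isHomogeneous_quarticForm t b e)
    (fun A _ _ _ _ _ _ x hx ↦ ?_) i
  let ι := algebraMap R A
  have ι_dvd : 27 - 16 * ι b ∣ ι t := by simpa [map_ofNat] using map_dvd ι hdvd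
  have singular : IsSingularZero (quarticForm (ι t) (ι b) (ι e)) x := by
    rw [← map_quarticForm]
    exact isSingularZero_map_iff.2 hx
  simpa [Fin.forall_fin_succ] using singular.quarticSingularEquations.mem_maximalIdeal
    (by simpa [map_ofNat] using two.map ι) (by simpa [map_ofNat] using three.map ι)
    (hb.map ι) (he.map ι) ((map_mem_nonunits_iff ι t).2 ht)
    ((map_ne_zero_iff ι (FaithfulSMul.algebraMap_injective R A)).2 ht_ne) ι_dvd

end Quartic

section PowerSeries

variable {k : Type*} [Field k]

theorem isUnit_of_constantCoeff_ne_zero {f : PowerSeries k}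
    (hf : PowerSeries.constantCoeff f ≠ 0) : IsUnit f :=
  PowerSeries.isUnit_iff_constantCoeff.2 hf.isUnit

theorem twentySeven_sub_dvd_X (two : (2 : k) ≠ 0) {a : k} (ha : a = 1 → (11 : k) ≠ 0) :
    27 - 16 * (PowerSeries.X + PowerSeries.C a * (1 - PowerSeries.X)) ∣
      (PowerSeries.X : PowerSeries k) := by
  by_cases h : 27 - 16 * a = 0
  · have ha_ne : 16 * (a - 1) ≠ 0 := by
      refine mul_ne_zero ?_ (sub_ne_zero.2 fun ha_eq ↦ ha ha_eq ?_)
      · rw [show (16 : k) = 2 ^ 4 by norm_num]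
        exact pow_ne_zero 4 two
      · linear_combination h + 16 * ha_eq
    have factor : 27 - 16 * (PowerSeries.X + PowerSeries.C a * (1 - PowerSeries.X)) =
        PowerSeries.C (16 * (a - 1)) * PowerSeries.X := by
      have C_h := congr(PowerSeries.C $h)
      simp only [map_sub, map_mul, map_ofNat, map_one, map_zero] at C_h ⊢
      linear_combination C_h
    rw [factor]
    exact ((ha_ne.isUnit.map PowerSeries.C).mul_left_dvd).2 dvd_rfl
  · exact (isUnit_of_constantCoeff_ne_zero (by simpa [map_ofNat] using h)).dvd

theorem quartic_smooth_over_laurent_series_general {K : Type*} [Field K]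
    [Algebra (PowerSeries k) K] [FaithfulSMul (PowerSeries k) K] (two : (2 : k) ≠ 0)
    (three : (3 : k) ≠ 0) {a c : k} (ha0 : a ≠ 0) (hc0 : c ≠ 0) (ha : a = 1 → (11 : k) ≠ 0)
    (i : Fin 4) :
    Algebra.Smooth K (MvPolynomial (Fin 4) K ⧸ Ideal.span
      {map (algebraMap (PowerSeries k) K) (quarticForm PowerSeries.X
        (PowerSeries.X + PowerSeries.C a * (1 - PowerSeries.X))
        (PowerSeries.C c - PowerSeries.X)), X i - 1}) := by
  have X_not_isUnit : ¬IsUnit (PowerSeries.X : PowerSeries k) := by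
    simp [PowerSeries.isUnit_iff_constantCoeff]
  refine smooth_chart_quarticForm ?_ ?_ ?_ ?_ X_not_isUnit PowerSeries.X_ne_zero
    (twentySeven_sub_dvd_X two ha) i <;> apply isUnit_of_constantCoeff_ne_zero
  · simpa [map_ofNat] using two
  · simpa [map_ofNat] using three
  · simpa using ha0
  · simpa using hc0

end PowerSeries

theorem FquarticK_eq_map_quarticForm (p : ℕ) (K : Type) [Field K]
    [Algebra (PowerSeries (ZMod p)) K] (c a : ZMod p) :
    FquarticK p K c a = map (algebraMap (PowerSeries (ZMod p)) K)
      (quarticForm PowerSeries.X (PowerSeries.X + PowerSeries.C a * (1 - PowerSeries.X))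
        (PowerSeries.C c - PowerSeries.X)) := by
  simp [FquarticK, Fquartic, quarticForm]

theorem quartic_smooth_over_laurent_series
    (p : ℕ) [Fact p.Prime] (hp : 5 ≤ p)
    (K : Type) [Field K] [Algebra (PowerSeries (ZMod p)) K]
    [IsFractionRing (PowerSeries (ZMod p)) K]
    (c : ZMod p) (hc0 : c ≠ 0) (hc : ¬ IsSquare c)
    (a : ZMod p) (ha0 : a ≠ 0) (ha : 27 * a ≠ 16)
    (i : Fin 4) :
    Algebra.Smooth K
      (MvPolynomial (Fin 4) K ⧸ Ideal.span {FquarticK p K c a, X i - 1}) := by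
  have natCast_ne_zero (m : ℕ) (hm : 0 < m) (hmp : m < p) : (m : ZMod p) ≠ 0 := fun h ↦
    hmp.not_ge (Nat.le_of_dvd hm ((ZMod.natCast_eq_zero_iff m p).1 h))
  rw [FquarticK_eq_map_quarticForm]
  exact quartic_smooth_over_laurent_series_general
    (by exact_mod_cast natCast_ne_zero 2 (by lia) (by lia))
    (by exact_mod_cast natCast_ne_zero 3 (by lia) (by lia)) ha0 hc0
    (fun ha_one h ↦ ha (by linear_combination 27 * ha_one + h)) i

end
end
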